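/- Let P be a set of n points in convex position in the Euclidean plane and let p, q ∈ P be antipodal points, i.e., there exist two distinct parallel lines, one through p and one through q, such that all points of P lie in the closed strip between them. Then the number of pairs {a, b} ⊆ P at Euclidean distance exactly 1 such that a and b lie strictly on the same side of the line through p and q is at most 2n. -/

import Mathlib

/-- A finite set of points in the plane is in convex position if every point of the set is an
extreme point of its convex hull. -/
def ConvexPosition (P : Set (EuclideanSpace ℝ (Fin 2))) : Prop :=
  ∀ p ∈ P, p ∈ (convexHull ℝ P).extremePoints ℝ

/-- `p` and `q` are antipodal points of `P`: there are two distinct parallel lines, one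
through `p` and one through `q`, with all of `P` in the closed strip between them.
Equivalently, some linear functional separates: it takes different values at `p` and `q`,
and on all of `P` its values lie between its values at `p` and at `q`. -/
def Antipodal (P : Set (EuclideanSpace ℝ (Fin 2))) (p q : EuclideanSpace ℝ (Fin 2)) :
    Prop :=
  ∃ g : EuclideanSpace ℝ (Fin 2) →ₗ[ℝ] ℝ, g p ≠ g q ∧
    ∀ x ∈ P, min (g p) (g q) ≤ g x ∧ g x ≤ max (g p) (g q)

abbrev E2 := EuclideanSpace ℝ (Fin 2)

lemma key_extreme (P : Finset E2) (hconv : ConvexPosition (P : Set E2)) (p q : E2)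
    (hp : p ∈ P) (hq : q ∈ P) (g F : E2 →ₗ[ℝ] ℝ) (hg : g p < g q)
    (hb : ∀ x ∈ P, g p ≤ g x ∧ g x ≤ g q) (hF : F p = F q)
    (hinj : ∀ v, g v = 0 → F v = 0 → v = 0)
    (b d : E2) (hbP : b ∈ P) (hd : d ∈ convexHull ℝ (P : Set E2)) (hgd : g d = g b)
    (h1 : F p < F b) (h2 : F b < F d) : False := by
  have hext := hconv b hbP
  have hL : 0 < g q - g p := by linarith
  obtain ⟨hb1, hb2⟩ := hb b hbP
  set r := (g b - g p) / (g q - g p) with hr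
  have hr0 : 0 ≤ r := div_nonneg (by linarith) hL.le
  have hr1 : r ≤ 1 := by rw [hr, div_le_one hL]; linarith
  have hrr : r * (g q - g p) = g b - g p := by rw [hr]; field_simp
  set e := (1 - r) • p + r • q with he
  have heh : e ∈ convexHull ℝ (P : Set E2) :=
    (convex_convexHull ℝ _) (subset_convexHull ℝ _ hp) (subset_convexHull ℝ _ hq)
      (by linarith) hr0 (by ring)
  have hge : g e = g b := by
    simp only [he, map_add, map_smul, smul_eq_mul]; linarith
  have hFe : F e = F p := by
    simp only [he, map_add, map_smul, smul_eq_mul, ← hF]; ring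
  have hD : 0 < F d - F p := by linarith
  set s := (F b - F p) / (F d - F p) with hs
  have hs0 : 0 < s := div_pos (by linarith) hD
  have hs1 : s < 1 := by rw [hs, div_lt_one hD]; linarith
  have hss : s * (F d - F p) = F b - F p := by rw [hs]; field_simp
  have hbe : s • d + (1 - s) • e = b := by
    rw [← sub_eq_zero]
    apply hinj
    · simp only [map_add, map_sub, map_smul, smul_eq_mul, hge, hgd]; ring
    · simp only [map_add, map_sub, map_smul, smul_eq_mul, hFe]; linarith
  have := hext.2 hd heh ⟨s, 1 - s, hs0, by linarith, by ring, hbe⟩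
  rw [this] at h2
  exact lt_irrefl _ h2

lemma key_inj (P : Finset E2) (hconv : ConvexPosition (P : Set E2)) (p q : E2)
    (hp : p ∈ P) (hq : q ∈ P) (g F : E2 →ₗ[ℝ] ℝ) (hg : g p < g q)
    (hb : ∀ x ∈ P, g p ≤ g x ∧ g x ≤ g q) (hF : F p = F q)
    (hinj : ∀ v, g v = 0 → F v = 0 → v = 0)
    (a b : E2) (ha : a ∈ P) (hbP : b ∈ P) (hFa : F p < F a) (hFb : F p < F b)
    (hab : g a = g b) : a = b := by
  rcases lt_trichotomy (F a) (F b) with h | h | h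
  · exact (key_extreme P hconv p q hp hq g F hg hb hF hinj a b ha
      (subset_convexHull ℝ _ hbP) hab.symm hFa h).elim
  · rw [← sub_eq_zero]
    apply hinj <;> simp [hab, h]
  · exact (key_extreme P hconv p q hp hq g F hg hb hF hinj b a hbP
      (subset_convexHull ℝ _ ha) hab hFb h).elim

lemma key_concave (P : Finset E2) (hconv : ConvexPosition (P : Set E2)) (p q : E2)
    (hp : p ∈ P) (hq : q ∈ P) (g F : E2 →ₗ[ℝ] ℝ) (hg : g p < g q)
    (hb : ∀ x ∈ P, g p ≤ g x ∧ g x ≤ g q) (hF : F p = F q)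
    (hinj : ∀ v, g v = 0 → F v = 0 → v = 0)
    (a b c : E2) (ha : a ∈ P) (hbP : b ∈ P) (hc : c ∈ P) (hFb : F p < F b)
    (hab : g a < g b) (hbc : g b < g c) :
    F (c - b) * g (b - a) < F (b - a) * g (c - b) := by
  by_contra! hcon
  simp only [map_sub] at hcon
  have hL : 0 < g c - g a := by linarith
  set t := (g b - g a) / (g c - g a) with ht
  have ht0 : 0 < t := div_pos (by linarith) hL
  have ht1 : t < 1 := by rw [ht, div_lt_one hL]; linarith
  have htt : t * (g c - g a) = g b - g a := by rw [ht]; field_simp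
  set d := (1 - t) • a + t • c with hd
  have hdh : d ∈ convexHull ℝ (P : Set E2) :=
    (convex_convexHull ℝ _) (subset_convexHull ℝ _ ha) (subset_convexHull ℝ _ hc)
      (by linarith) ht0.le (by ring)
  have hgd : g d = g b := by
    simp only [hd, map_add, map_smul, smul_eq_mul]; linarith
  have hFd : F d = F a + t * (F c - F a) := by
    simp only [hd, map_add, map_smul, smul_eq_mul]; ring
  have hle : F b ≤ F d := by
    have : F b * (g c - g a) ≤ F d * (g c - g a) := by
      have : F d * (g c - g a) = F a * (g c - g a) + (g b - g a) * (F c - F a) := by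
        rw [hFd, ← htt]; ring
      rw [this]; nlinarith
    exact le_of_mul_le_mul_right this hL
  rcases hle.lt_or_eq with h | h
  · exact key_extreme P hconv p q hp hq g F hg hb hF hinj b d hbP hdh hgd hFb h
  · have hdb : d = b := by
      rw [← sub_eq_zero]
      apply hinj <;> simp [hgd, h]
    have := (hconv b hbP).2 (subset_convexHull ℝ _ ha) (subset_convexHull ℝ _ hc)
      ⟨1 - t, t, by linarith, ht0, by ring, hdb⟩
    rw [this] at hab
    exact lt_irrefl _ hab

lemma acute (a' a b : E2) (h : a' ≠ a) (h1 : dist a' b = 1) (h2 : dist a b = 1) :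
    inner ℝ (a - a') (b - a) < 0 := by
  have e : b - a' = (a - a') + (b - a) := by abel
  have h3 : ‖b - a'‖ = 1 := by rw [← dist_eq_norm, dist_comm]; exact h1
  have h4 : ‖b - a‖ = 1 := by rw [← dist_eq_norm, dist_comm]; exact h2
  have h5 := norm_add_sq_real (a - a') (b - a)
  rw [← e, h3, h4] at h5
  have h6 : 0 < ‖a - a'‖ := by rw [norm_pos_iff, sub_ne_zero]; exact h.symm
  nlinarith

lemma no_four (g F : E2 →ₗ[ℝ] ℝ) (hinj : ∀ v, g v = 0 → F v = 0 → v = 0) (u v w : E2)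
    (hu : 0 < g u) (hv : 0 < g v) (hw : 0 < g w)
    (h1 : F v * g u < F u * g v) (h2 : F w * g v < F v * g w)
    (i1 : inner ℝ u v < 0) (i2 : inner ℝ v w < 0) : False := by
  have key : (F u * g w - F w * g u) • v =
      (F v * g w - F w * g v) • u + (F u * g v - F v * g u) • w := by
    rw [← sub_eq_zero]
    apply hinj <;> simp only [map_add, map_sub, map_smul, smul_eq_mul] <;> ring
  have hD : 0 < F u * g w - F w * g u := by
    have : 0 < (F u * g w - F w * g u) * g v := by
      nlinarith [mul_pos (sub_pos.2 h1) hw, mul_pos (sub_pos.2 h2) hu]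
    exact pos_of_mul_pos_left this hv.le
  have h := congrArg (fun x => inner ℝ x v) key
  simp only [inner_add_left, real_inner_smul_left] at h
  rw [real_inner_comm w v] at i2
  have h0 : 0 ≤ inner ℝ v v := real_inner_self_nonneg
  nlinarith [mul_pos (sub_pos.2 h2) (neg_pos.2 i1), mul_pos (sub_pos.2 h1) (neg_pos.2 i2),
    mul_nonneg hD.le h0]

open Classical in
lemma side_count (P : Finset E2) (hconv : ConvexPosition (P : Set E2)) (p q : E2)
    (hp : p ∈ P) (hq : q ∈ P) (g F : E2 →ₗ[ℝ] ℝ) (hg : g p < g q)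
    (hb : ∀ x ∈ P, g p ≤ g x ∧ g x ≤ g q) (hF : F p = F q)
    (hinj : ∀ v, g v = 0 → F v = 0 → v = 0) :
    ((P ×ˢ P).filter (fun e : E2 × E2 => dist e.1 e.2 = 1 ∧ F p < F e.1 ∧ F p < F e.2 ∧
      g e.1 < g e.2)).card ≤ 2 * (P.filter (fun a => F p < F a)).card := by
  set A := (P ×ˢ P).filter (fun e : E2 × E2 => dist e.1 e.2 = 1 ∧ F p < F e.1 ∧ F p < F e.2 ∧
      g e.1 < g e.2) with hA
  set S := P.filter (fun a => F p < F a) with hS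
  have memA : ∀ a b, (a, b) ∈ A ↔ (a ∈ P ∧ b ∈ P) ∧ dist a b = 1 ∧ F p < F a ∧ F p < F b ∧
      g a < g b := by
    intro a b; simp [hA]
  set A1 := A.filter (fun e => ∀ b', (e.1, b') ∈ A → g b' ≤ g e.2) with hA1
  set A2 := A.filter (fun e => ∀ a', (a', e.2) ∈ A → g e.1 ≤ g a') with hA2
  have hsub : A ⊆ A1 ∪ A2 := by
    rintro ⟨a, b⟩ hab
    by_contra hcon
    rw [Finset.mem_union, not_or] at hcon
    obtain ⟨c1, c2⟩ := hcon
    simp only [hA1, hA2, Finset.mem_filter, hab, true_and, not_forall, not_le] at c1 c2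
    obtain ⟨b', hb'A, hb'⟩ := c1
    obtain ⟨a', ha'A, ha'⟩ := c2
    rw [memA] at hab hb'A ha'A
    obtain ⟨⟨haP, hbP⟩, hd, hFa, hFb, hgab⟩ := hab
    obtain ⟨⟨-, hb'P⟩, hd1, -, hFb', -⟩ := hb'A
    obtain ⟨⟨ha'P, -⟩, hd2, hFa', -, -⟩ := ha'A
    refine no_four g F hinj (a - a') (b - a) (b' - b) (by simp [ha']) (by simp [hgab])
      (by simp [hb'])
      (key_concave P hconv p q hp hq g F hg hb hF hinj a' a b ha'P haP hbP hFa ha' hgab)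
      (key_concave P hconv p q hp hq g F hg hb hF hinj a b b' haP hbP hb'P hFb hgab hb')
      (acute a' a b (by rintro rfl; exact lt_irrefl _ ha') hd2 hd) ?_
    have := acute b' b a (by rintro rfl; exact lt_irrefl _ hb') (by rw [dist_comm]; exact hd1)
      (by rw [dist_comm]; exact hd)
    rw [← neg_sub b' b, ← neg_sub b a, inner_neg_neg, real_inner_comm] at this
    exact this
  have c1 : A1.card ≤ S.card := by
    apply Finset.card_le_card_of_injOn Prod.fst
    · rintro ⟨a, b⟩ h
      have h := (Finset.mem_filter.1 (Finset.mem_coe.1 h)).1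
      rw [memA] at h
      simp [hS, h.1.1, h.2.2.1]
    · rintro ⟨a, b⟩ h ⟨a', b'⟩ h' heq
      obtain rfl : a = a' := heq
      obtain ⟨h, hm⟩ := Finset.mem_filter.1 (Finset.mem_coe.1 h)
      obtain ⟨h', hm'⟩ := Finset.mem_filter.1 (Finset.mem_coe.1 h')
      have e := le_antisymm (hm' _ h) (hm _ h')
      rw [memA] at h h'
      rw [key_inj P hconv p q hp hq g F hg hb hF hinj b b' h.1.2 h'.1.2 h.2.2.2.1 h'.2.2.2.1 e]
  have c2 : A2.card ≤ S.card := by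
    apply Finset.card_le_card_of_injOn Prod.snd
    · rintro ⟨a, b⟩ h
      have h := (Finset.mem_filter.1 (Finset.mem_coe.1 h)).1
      rw [memA] at h
      simp [hS, h.1.2, h.2.2.2.1]
    · rintro ⟨a, b⟩ h ⟨a', b'⟩ h' heq
      obtain rfl : b = b' := heq
      obtain ⟨h, hm⟩ := Finset.mem_filter.1 (Finset.mem_coe.1 h)
      obtain ⟨h', hm'⟩ := Finset.mem_filter.1 (Finset.mem_coe.1 h')
      have e := le_antisymm (hm _ h') (hm' _ h)
      rw [memA] at h h'
      rw [key_inj P hconv p q hp hq g F hg hb hF hinj a a' h.1.1 h'.1.1 h.2.2.1 h'.2.2.1 e]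
  have := Finset.card_le_card hsub
  have := Finset.card_union_le A1 A2
  omega

lemma exists_F (p q : E2) (g : E2 →ₗ[ℝ] ℝ) (hg : g p < g q) :
    ∃ F : E2 →ₗ[ℝ] ℝ, F p = F q ∧ (∀ v, g v = 0 → F v = 0 → v = 0) := by
  obtain ⟨d, hd⟩ : ∃ d, d = q - p := ⟨_, rfl⟩
  have hgd : g d ≠ 0 := by rw [hd, map_sub]; linarith
  let F : E2 →ₗ[ℝ] ℝ :=
    { toFun := fun x => d 0 * x 1 - d 1 * x 0
      map_add' := by intro x y; simp; ring
      map_smul' := by intro c x; simp; ring }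
  have hFx : ∀ x, F x = d 0 * x 1 - d 1 * x 0 := fun x => rfl
  refine ⟨F, ?_, ?_⟩
  · rw [hFx, hFx, hd]; simp; ring
  · intro v hv hFv
    rw [hFx] at hFv
    have e0 : d 0 • v = v 0 • d := by
      ext i; fin_cases i <;> simp <;> linarith
    have e1 : d 1 • v = v 1 • d := by
      ext i; fin_cases i <;> simp <;> linarith
    have e0' := congrArg g e0
    have e1' := congrArg g e1
    simp only [map_smul, smul_eq_mul, hv, mul_zero] at e0' e1'
    have z0 : v 0 = 0 := by
      rcases mul_eq_zero.1 e0'.symm with h | h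
      · exact h
      · exact absurd h hgd
    have z1 : v 1 = 0 := by
      rcases mul_eq_zero.1 e1'.symm with h | h
      · exact h
      · exact absurd h hgd
    ext i; fin_cases i <;> simp [z0, z1]

open AffineSubspace in
lemma side_sign (p q a b : E2) (g F : E2 →ₗ[ℝ] ℝ) (hg : g p < g q) (hF : F p = F q)
    (hinj : ∀ v, g v = 0 → F v = 0 → v = 0)
    (h : AffineSubspace.SSameSide (affineSpan ℝ {p, q}) a b) :
    (F p < F a ∧ F p < F b) ∨ (F a < F p ∧ F b < F p) := by
  obtain ⟨⟨p1, hp1, p2, hp2, hr⟩, ha, hb⟩ := h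
  have hmem : ∀ x ∈ affineSpan ℝ ({p, q} : Set E2), F x = F p := by
    intro x hx
    obtain ⟨r, rfl⟩ := (mem_affineSpan_pair_iff_exists_lineMap_eq).1 hx
    simp [AffineMap.lineMap_apply, hF]
  have hne : ∀ x ∉ affineSpan ℝ ({p, q} : Set E2), F x - F p ≠ 0 := by
    intro x hx h0
    apply hx
    rw [mem_affineSpan_pair_iff_exists_lineMap_eq]
    refine ⟨(g x - g p) / (g q - g p), ?_⟩
    have hL : g q - g p ≠ 0 := by linarith
    rw [← sub_eq_zero]
    apply hinj
    · simp [AffineMap.lineMap_apply]; field_simp; ring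
    · simp [AffineMap.lineMap_apply, hF] ; linarith
  have hr' := hr.map F
  simp only [vsub_eq_sub, map_sub, hmem _ hp1, hmem _ hp2] at hr'
  have hna := hne a ha
  have hnb := hne b hb
  rcases hr' with h | h | ⟨r1, r2, hr1, hr2, h⟩
  · exact absurd h hna
  · exact absurd h hnb
  · simp only [smul_eq_mul] at h
    rcases lt_or_gt_of_ne hna with h' | h'
    · right
      refine ⟨by linarith, ?_⟩
      by_contra! hc
      nlinarith [mul_neg_of_pos_of_neg hr1 h', mul_nonneg hr2.le (sub_nonneg.2 hc)]
    · left
      refine ⟨by linarith, ?_⟩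
      by_contra! hc
      nlinarith [mul_pos hr1 h', mul_nonneg hr2.le (sub_nonneg.2 hc)]

/-- Let `P` be a set of `n` points in convex position in the plane and `p, q ∈ P` antipodal
points.  Then the number of pairs `{a, b} ⊆ P` at distance exactly `1` lying strictly on
the same side of the line through `p` and `q` is at most `2n`.  (Ordered pairs count each
unordered pair twice, whence the extra factor `2`.) -/
theorem unit_distances_not_crossing_antipodal_chord
    (P : Finset (EuclideanSpace ℝ (Fin 2)))
    (hconv : ConvexPosition (P : Set (EuclideanSpace ℝ (Fin 2))))
    (p q : EuclideanSpace ℝ (Fin 2)) (hp : p ∈ P) (hq : q ∈ P) (hpq : p ≠ q)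
    (hanti : Antipodal (P : Set (EuclideanSpace ℝ (Fin 2))) p q) :
    ({e : EuclideanSpace ℝ (Fin 2) × EuclideanSpace ℝ (Fin 2) |
        e.1 ∈ P ∧ e.2 ∈ P ∧ dist e.1 e.2 = 1 ∧
        AffineSubspace.SSameSide (affineSpan ℝ {p, q}) e.1 e.2}.ncard : ℕ) ≤
      2 * (2 * P.card) := by
  classical
  obtain ⟨g, hg, hb⟩ : ∃ g : E2 →ₗ[ℝ] ℝ, g p < g q ∧ ∀ x ∈ P, g p ≤ g x ∧ g x ≤ g q := by
    obtain ⟨g, hne, h⟩ := hanti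
    rcases lt_or_gt_of_ne hne with h' | h'
    · refine ⟨g, h', fun x hx => ?_⟩
      have := h x hx
      rwa [min_eq_left h'.le, max_eq_right h'.le] at this
    · refine ⟨-g, by simpa using h', fun x hx => ?_⟩
      have := h x hx
      rw [min_eq_right h'.le, max_eq_left h'.le] at this
      simpa using this.symm
  obtain ⟨F, hF, hinj⟩ := exists_F p q g hg
  have hF' : (-F) p = (-F) q := by simp [hF]
  have hinj' : ∀ v, g v = 0 → (-F) v = 0 → v = 0 := fun v h1 h2 => hinj v h1 (by simpa using h2)
  have k1 := side_count P hconv p q hp hq g F hg hb hF hinj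
  have k2 := side_count P hconv p q hp hq g (-F) hg hb hF' hinj'
  have kk : (P.filter (fun a => F p < F a)).card + (P.filter (fun a => (-F) p < (-F) a)).card
      ≤ P.card := by
    rw [← Finset.card_union_of_disjoint]
    · exact Finset.card_le_card (Finset.union_subset (Finset.filter_subset _ _)
        (Finset.filter_subset _ _))
    · rw [Finset.disjoint_filter]
      intro x _ h1 h2
      simp at h2
      linarith
  set A := (P ×ˢ P).filter (fun e : E2 × E2 => dist e.1 e.2 = 1 ∧ F p < F e.1 ∧ F p < F e.2 ∧
      g e.1 < g e.2) with hA
  set B := (P ×ˢ P).filter (fun e : E2 × E2 => dist e.1 e.2 = 1 ∧ (-F) p < (-F) e.1 ∧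
      (-F) p < (-F) e.2 ∧ g e.1 < g e.2) with hB
  have hsub : {e : EuclideanSpace ℝ (Fin 2) × EuclideanSpace ℝ (Fin 2) |
        e.1 ∈ P ∧ e.2 ∈ P ∧ dist e.1 e.2 = 1 ∧
        AffineSubspace.SSameSide (affineSpan ℝ {p, q}) e.1 e.2} ⊆
      (((A ∪ B) ∪ (A ∪ B).image Prod.swap : Finset (E2 × E2)) : Set (E2 × E2)) := by
    rintro ⟨a, b⟩ ⟨ha, hbP, hd, hs⟩
    simp only at ha hbP hd hs
    have hab : a ≠ b := by rintro rfl; simp at hd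
    have hd' : dist b a = 1 := by rw [dist_comm]; exact hd
    have hsgn := side_sign p q a b g F hg hF hinj hs
    have hgne : g a ≠ g b := by
      intro h
      apply hab
      rcases hsgn with ⟨h1, h2⟩ | ⟨h1, h2⟩
      · exact key_inj P hconv p q hp hq g F hg hb hF hinj a b ha hbP h1 h2 h
      · exact key_inj P hconv p q hp hq g (-F) hg hb hF' hinj' a b ha hbP (by simpa using h1)
          (by simpa using h2) h
    have hmem : ∀ x y : E2, x ∈ P → y ∈ P → dist x y = 1 → g x < g y →
        ((F p < F x ∧ F p < F y) ∨ (F x < F p ∧ F y < F p)) → (x, y) ∈ A ∪ B := by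
      intro x y hx hy hxy hgxy hh
      rw [Finset.mem_union]
      rcases hh with ⟨h1, h2⟩ | ⟨h1, h2⟩
      · left; simp [hA, hx, hy, hxy, hgxy, h1, h2]
      · right; simp [hB, hx, hy, hxy, hgxy, h1, h2]
    rw [Finset.mem_coe, Finset.mem_union]
    rcases lt_or_gt_of_ne hgne with h | h
    · left; exact hmem a b ha hbP hd h hsgn
    · right
      exact Finset.mem_image.2 ⟨(b, a), hmem b a hbP ha hd' h (by tauto), rfl⟩
  have n1 := Set.ncard_le_ncard hsub (Finset.finite_toSet _)
  rw [Set.ncard_coe_finset] at n1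
  have n2 := Finset.card_union_le (A ∪ B) ((A ∪ B).image Prod.swap)
  have n3 : ((A ∪ B).image Prod.swap).card ≤ (A ∪ B).card := Finset.card_image_le
  have n4 := Finset.card_union_le A B
  omega
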